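/- arXiv:1901.07271 — 2 statements merged into one kernel-verified Lean document; each statement's English description precedes it below -/
import Mathlib

section
/- Let γ be an affinely parametrized null geodesic of the warped product g = ĝ + f² ḡ with tangent N^μ = (N̂^a, N̄^i), and let C ≥ 0 be the constant with ḡ_{ij} N̄^i N̄^j = C/f⁴. Then the base projection satisfies the subgeodesic equation N̂^b ∇̂_b N̂^a = −(ĝ_{bc} N̂^b N̂^c) ∇̂^a(ln f) = (C/f³) ∇̂^a f = −(C/2) ∇̂^a(1/f²), and its tangent satisfies the first integral ĝ_{ab} N̂^a N̂^b = −C/f². -/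
open Filter MeasureTheory
open scoped BigOperators Topology

noncomputable section

namespace Paper

variable {ι : Type*} [Fintype ι] [DecidableEq ι]
variable {κ : Type*} [Fintype κ] [DecidableEq κ]

/-- Coordinate partial derivative of a scalar field in the direction `ρ`. -/
def pd (h : (ι → ℝ) → ℝ) (ρ : ι) (x : ι → ℝ) : ℝ :=
  fderiv ℝ h x (Pi.single ρ 1)

/-- The inverse metric. -/
def ginv (g : (ι → ℝ) → Matrix ι ι ℝ) (x : ι → ℝ) : Matrix ι ι ℝ :=
  (g x)⁻¹

/-- Christoffel symbols `Γ^μ_{ρσ} = ½ g^{μν}(∂_ρ g_{νσ} + ∂_σ g_{νρ} − ∂_ν g_{ρσ})`. -/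
def Γc (g : (ι → ℝ) → Matrix ι ι ℝ) (μ ρ σ : ι) (x : ι → ℝ) : ℝ :=
  (1 / 2) * ∑ ν, ginv g x μ ν *
    (pd (fun y => g y ν σ) ρ x + pd (fun y => g y ν ρ) σ x - pd (fun y => g y ρ σ) ν x)

/-- Riemann curvature tensor `R^α_{βμν}`. -/
def Riem (g : (ι → ℝ) → Matrix ι ι ℝ) (α β μ ν : ι) (x : ι → ℝ) : ℝ :=
  pd (Γc g α ν β) μ x - pd (Γc g α μ β) ν x
    + ∑ lam, Γc g α μ lam x * Γc g lam ν β x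
    - ∑ lam, Γc g α ν lam x * Γc g lam μ β x

/-- Riemann tensor with the first index lowered, `R_{μνρσ} = g_{μλ} R^λ_{νρσ}`. -/
def RiemLow (g : (ι → ℝ) → Matrix ι ι ℝ) (μ ν ρ σ : ι) (x : ι → ℝ) : ℝ :=
  ∑ lam, g x μ lam * Riem g lam ν ρ σ x

/-- Ricci tensor `R_{μν} = R^ρ_{μρν}`. -/
def Ric (g : (ι → ℝ) → Matrix ι ι ℝ) (μ ν : ι) (x : ι → ℝ) : ℝ :=
  ∑ ρ, Riem g ρ μ ρ ν x

/-- Scalar product of two vectors with respect to the metric at `x`. -/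
def sq (g : (ι → ℝ) → Matrix ι ι ℝ) (x : ι → ℝ) (v w : ι → ℝ) : ℝ :=
  ∑ μ, ∑ ν, g x μ ν * v μ * w ν

/-- Velocity (tangent vector field) of a parametrized curve. -/
def vel (γ : ℝ → ι → ℝ) (u : ℝ) : ι → ℝ :=
  fun μ => deriv (fun w => γ w μ) u

/-- Covariant derivative, along the curve `γ`, of a vector field `V` given along `γ`. -/
def covD (g : (ι → ℝ) → Matrix ι ι ℝ) (γ V : ℝ → ι → ℝ) (u : ℝ) (μ : ι) : ℝ :=
  deriv (fun w => V w μ) u + ∑ ρ, ∑ σ, Γc g μ ρ σ (γ u) * vel γ u ρ * V u σ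

/-- The (affinely parametrized) geodesic equation at parameter value `u`. -/
def GeodesicAt (g : (ι → ℝ) → Matrix ι ι ℝ) (γ : ℝ → ι → ℝ) (u : ℝ) : Prop :=
  ∀ μ, covD g γ (vel γ) u μ = 0

/-- `γ` is an affinely parametrized geodesic of `g`. -/
def IsGeodesic (g : (ι → ℝ) → Matrix ι ι ℝ) (γ : ℝ → ι → ℝ) : Prop :=
  ∀ u, GeodesicAt g γ u

/-- `E` is parallelly transported along `γ`. -/
def IsParallel (g : (ι → ℝ) → Matrix ι ι ℝ) (γ E : ℝ → ι → ℝ) : Prop :=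
  ∀ u μ, covD g γ E u μ = 0

def SmoothCurve (γ : ℝ → ι → ℝ) : Prop :=
  ∀ μ, ContDiff ℝ (⊤ : ℕ∞) fun u => γ u μ

/-- A smooth symmetric everywhere-nondegenerate metric. -/
def SmoothMetric (g : (ι → ℝ) → Matrix ι ι ℝ) : Prop :=
  (∀ μ ν, ContDiff ℝ (⊤ : ℕ∞) fun x => g x μ ν) ∧
    (∀ x μ ν, g x μ ν = g x ν μ) ∧ ∀ x, IsUnit (g x).det

/-- Lorentzian signature `(−,+,…,+)`: there is a timelike vector whose `g`-orthogonal
complement is positive definite. -/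
def Lorentzian (g : (ι → ℝ) → Matrix ι ι ℝ) : Prop :=
  SmoothMetric g ∧
    ∀ x, ∃ t : ι → ℝ, sq g x t t < 0 ∧ ∀ v : ι → ℝ, sq g x t v = 0 → v ≠ 0 → 0 < sq g x v v

/-- Riemannian (positive definite) metric. -/
def Riemannian (g : (ι → ℝ) → Matrix ι ι ℝ) : Prop :=
  SmoothMetric g ∧ ∀ x, ∀ v : ι → ℝ, v ≠ 0 → 0 < sq g x v v

def NullVec (g : (ι → ℝ) → Matrix ι ι ℝ) (x v : ι → ℝ) : Prop :=
  sq g x v v = 0 ∧ v ≠ 0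

/-- A time orientation: an everywhere timelike vector field. -/
def TimeOrientation (g : (ι → ℝ) → Matrix ι ι ℝ) (T : (ι → ℝ) → ι → ℝ) : Prop :=
  ∀ x, sq g x (T x) (T x) < 0

/-- `v` is a future-pointing causal vector at `x` (wrt the time orientation `T`). -/
def FutureCausal (g : (ι → ℝ) → Matrix ι ι ℝ) (T : (ι → ℝ) → ι → ℝ) (x v : ι → ℝ) : Prop :=
  sq g x v v ≤ 0 ∧ v ≠ 0 ∧ sq g x (T x) v < 0

/-- `S` is met exactly once by every inextendible future-directed causal curve
(inextendibility being encoded by parametrization by Euclidean arclength on all of `ℝ`). -/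
def IsCauchySurface (g : (ι → ℝ) → Matrix ι ι ℝ) (T : (ι → ℝ) → ι → ℝ)
    (S : Set (ι → ℝ)) : Prop :=
  ∀ γ : ℝ → ι → ℝ, (∀ μ, Differentiable ℝ fun u => γ u μ) →
    (∀ u, FutureCausal g T (γ u) (vel γ u)) →
    (∀ u, ∑ μ, (vel γ u μ) ^ 2 = 1) → ∃! u, γ u ∈ S

/-- `g`-gradient vector of a scalar function. -/
def gradVec (g : (ι → ℝ) → Matrix ι ι ℝ) (τ : (ι → ℝ) → ℝ) (x : ι → ℝ) : ι → ℝ :=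
  fun μ => ∑ ν, ginv g x μ ν * pd τ ν x

/-- Existence of a non-compact (spacelike) Cauchy hypersurface, encoded as a regular
level set of a smooth function with timelike gradient. -/
def HasNoncompactCauchySurface (g : (ι → ℝ) → Matrix ι ι ℝ)
    (T : (ι → ℝ) → ι → ℝ) : Prop :=
  ∃ τ : (ι → ℝ) → ℝ, ContDiff ℝ (⊤ : ℕ∞) τ ∧ ¬ IsCompact {x | τ x = 0} ∧
    (∀ x, τ x = 0 → sq g x (gradVec g τ x) (gradVec g τ x) < 0) ∧
    IsCauchySurface g T {x | τ x = 0}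

/-- Null geodesic completeness: every null initial datum extends to a geodesic
defined for all values of the affine parameter. -/
def NullComplete (g : (ι → ℝ) → Matrix ι ι ℝ) : Prop :=
  ∀ x v : ι → ℝ, NullVec g x v →
    ∃ γ : ℝ → ι → ℝ, SmoothCurve γ ∧ γ 0 = x ∧ vel γ 0 = v ∧ IsGeodesic g γ

/-- Future null geodesic completeness. -/
def FutureNullComplete (g : (ι → ℝ) → Matrix ι ι ℝ) (T : (ι → ℝ) → ι → ℝ) : Prop :=
  ∀ x v : ι → ℝ, NullVec g x v → FutureCausal g T x v →
    ∃ γ : ℝ → ι → ℝ, SmoothCurve γ ∧ γ 0 = x ∧ vel γ 0 = v ∧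
      ∀ u, 0 ≤ u → GeodesicAt g γ u

/-! ### Submanifolds given implicitly as regular zero sets -/

/-- Differential (lowered normal covectors) of the defining map `F`. -/
def dFm (F : (ι → ℝ) → κ → ℝ) (α : κ) (μ : ι) (x : ι → ℝ) : ℝ :=
  pd (fun y => F y α) μ x

/-- The normal vectors `ν_α = grad F^α` spanning the normal space. -/
def normalBasis (g : (ι → ℝ) → Matrix ι ι ℝ) (F : (ι → ℝ) → κ → ℝ) (α : κ)
    (x : ι → ℝ) : ι → ℝ :=
  fun μ => ∑ ν, ginv g x μ ν * dFm F α ν x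

/-- Gram matrix `W_{αβ} = g(ν_α, ν_β)` of the normals. -/
def gram (g : (ι → ℝ) → Matrix ι ι ℝ) (F : (ι → ℝ) → κ → ℝ) (x : ι → ℝ) :
    Matrix κ κ ℝ :=
  Matrix.of fun α β => ∑ μ, dFm F α μ x * normalBasis g F β x μ

/-- The (contravariant) orthogonal projector onto the tangent space of `{F = 0}`. -/
def tanProj (g : (ι → ℝ) → Matrix ι ι ℝ) (F : (ι → ℝ) → κ → ℝ) (x : ι → ℝ)
    (μ ν : ι) : ℝ :=
  ginv g x μ ν -
    ∑ α, ∑ β, (gram g F x)⁻¹ α β * normalBasis g F α x μ * normalBasis g F β x ν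

/-- Covariant Hessian `∇_μ ∇_ν F^α`. -/
def hessF (g : (ι → ℝ) → Matrix ι ι ℝ) (F : (ι → ℝ) → κ → ℝ) (α : κ) (μ ν : ι)
    (x : ι → ℝ) : ℝ :=
  pd (fun y => dFm F α ν y) μ x - ∑ lam, Γc g lam μ ν x * dFm F α lam x

/-- The expansion `θ(n)` of the submanifold `{F = 0}` along the normal
`n = ∑ c_α ν_α`, namely `θ(n) = ∑_α c_α h^{μν} ∇_μ∇_ν F^α`. -/
def expansionCoeff (g : (ι → ℝ) → Matrix ι ι ℝ) (F : (ι → ℝ) → κ → ℝ) (x : ι → ℝ)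
    (c : κ → ℝ) : ℝ :=
  ∑ α, c α * ∑ μ, ∑ ν, tanProj g F x μ ν * hessF g F α μ ν x

/-- `v` is tangent to the level set `{F = 0}` at `x`. -/
def TangentTo (F : (ι → ℝ) → κ → ℝ) (x v : ι → ℝ) : Prop :=
  ∀ α, ∑ μ, dFm F α μ x * v μ = 0

/-- The normal vector with components `c` in the basis of normals. -/
def NormalComb (g : (ι → ℝ) → Matrix ι ι ℝ) (F : (ι → ℝ) → κ → ℝ) (x : ι → ℝ)
    (c : κ → ℝ) : ι → ℝ :=
  fun μ => ∑ α, c α * normalBasis g F α x μ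

/-- A closed (compact without boundary) spacelike submanifold, given as the regular
zero set of the smooth map `F`, of co-dimension `card κ`. -/
def ClosedSpacelikeSubmanifold (g : (ι → ℝ) → Matrix ι ι ℝ)
    (F : (ι → ℝ) → κ → ℝ) : Prop :=
  (∀ α, ContDiff ℝ (⊤ : ℕ∞) fun x => F x α) ∧
    IsCompact {x | ∀ α, F x α = 0} ∧ {x | ∀ α, F x α = 0}.Nonempty ∧
    (∀ x, (∀ α, F x α = 0) → IsUnit (gram g F x).det) ∧
    (∀ x, (∀ α, F x α = 0) → ∀ v, TangentTo F x v → v ≠ 0 → 0 < sq g x v v)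

/-- Future-trapped: every future-pointing causal normal has negative expansion. -/
def FutureTrapped (g : (ι → ℝ) → Matrix ι ι ℝ) (T : (ι → ℝ) → ι → ℝ)
    (F : (ι → ℝ) → κ → ℝ) : Prop :=
  ∀ x, (∀ α, F x α = 0) → ∀ c : κ → ℝ,
    FutureCausal g T x (NormalComb g F x c) → expansionCoeff g F x c < 0

/-! ### Warped products -/

def basePt {d₁ d₂ : ℕ} (x : (Fin d₁ ⊕ Fin d₂) → ℝ) : Fin d₁ → ℝ :=
  fun a => x (Sum.inl a)

def fibPt {d₁ d₂ : ℕ} (x : (Fin d₁ ⊕ Fin d₂) → ℝ) : Fin d₂ → ℝ :=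
  fun i => x (Sum.inr i)

/-- The warped product metric `g = ĝ + f² ḡ` in adapted coordinates. -/
def warped {d₁ d₂ : ℕ} (gB : (Fin d₁ → ℝ) → Matrix (Fin d₁) (Fin d₁) ℝ)
    (gF : (Fin d₂ → ℝ) → Matrix (Fin d₂) (Fin d₂) ℝ) (f : (Fin d₁ → ℝ) → ℝ) :
    ((Fin d₁ ⊕ Fin d₂) → ℝ) → Matrix (Fin d₁ ⊕ Fin d₂) (Fin d₁ ⊕ Fin d₂) ℝ :=
  fun x => Matrix.of fun μ ν =>
    match μ, ν with
    | Sum.inl a, Sum.inl b => gB (basePt x) a b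
    | Sum.inl _, Sum.inr _ => 0
    | Sum.inr _, Sum.inl _ => 0
    | Sum.inr i, Sum.inr j => (f (basePt x)) ^ 2 * gF (fibPt x) i j

/-- Projection of a spacetime curve to the base. -/
def baseCurve {d₁ d₂ : ℕ} (γ : ℝ → (Fin d₁ ⊕ Fin d₂) → ℝ) : ℝ → Fin d₁ → ℝ :=
  fun u => basePt (γ u)

/-- Projection of a spacetime curve to the fiber. -/
def fibCurve {d₁ d₂ : ℕ} (γ : ℝ → (Fin d₁ ⊕ Fin d₂) → ℝ) : ℝ → Fin d₂ → ℝ :=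
  fun u => fibPt (γ u)

/-- Lift of a base vector to the warped product (vanishing fiber components). -/
def liftVec {d₁ d₂ : ℕ} (v : Fin d₁ → ℝ) : (Fin d₁ ⊕ Fin d₂) → ℝ :=
  fun μ => match μ with
  | Sum.inl a => v a
  | Sum.inr _ => 0

/-- Lift of a base vector field (e.g. a time orientation) to the warped product. -/
def liftT {d₁ d₂ : ℕ} (T : (Fin d₁ → ℝ) → Fin d₁ → ℝ) :
    ((Fin d₁ ⊕ Fin d₂) → ℝ) → (Fin d₁ ⊕ Fin d₂) → ℝ :=
  fun x => liftVec (T (basePt x))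

/-- Defining map of the lift `ζ_p ⊆ Y_p` of the submanifold `{Fb = 0} ⊆ Y`. -/
def liftF {d₁ d₂ m' : ℕ} (p : Fin d₁ → ℝ) (Fb : (Fin d₂ → ℝ) → Fin m' → ℝ) :
    ((Fin d₁ ⊕ Fin d₂) → ℝ) → (Fin d₁ ⊕ Fin m') → ℝ :=
  fun x α => match α with
  | Sum.inl a => x (Sum.inl a) - p a
  | Sum.inr β => Fb (fibPt x) β

/-- Covariant Hessian `∇_μ∇_ν f` of a scalar function. -/
def hess (g : (ι → ℝ) → Matrix ι ι ℝ) (f : (ι → ℝ) → ℝ) (μ ν : ι) (x : ι → ℝ) : ℝ :=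
  pd (fun y => pd f ν y) μ x - ∑ lam, Γc g lam μ ν x * pd f lam x

/-- `∇^μ f ∇_μ f`. -/
def gradSq (g : (ι → ℝ) → Matrix ι ι ℝ) (f : (ι → ℝ) → ℝ) (x : ι → ℝ) : ℝ :=
  ∑ μ, ∑ ν, ginv g x μ ν * pd f μ x * pd f ν x

/-! ### Parametrized submanifolds and their expansions -/

/-- Partial derivative of a parametrization `φ`. -/
def dpar {k : ℕ} (φ : (Fin k → ℝ) → ι → ℝ) (A : Fin k) (μ : ι)
    (y : Fin k → ℝ) : ℝ :=
  fderiv ℝ (fun z => φ z μ) y (Pi.single A 1)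

/-- First fundamental form of a parametrized submanifold. -/
def firstFF {k : ℕ} (g : (ι → ℝ) → Matrix ι ι ℝ) (φ : (Fin k → ℝ) → ι → ℝ)
    (y : Fin k → ℝ) : Matrix (Fin k) (Fin k) ℝ :=
  Matrix.of fun A B => ∑ μ, ∑ ν, g (φ y) μ ν * dpar φ A μ y * dpar φ B ν y

/-- The expansion `θ(n) = n_μ H^μ` of a parametrized submanifold along a normal `n`,
via `θ(n) = −γ^{AB} n_μ (∂_A∂_B φ^μ + Γ^μ_{ρσ} ∂_A φ^ρ ∂_B φ^σ)`. -/
def expansionPar {k : ℕ} (g : (ι → ℝ) → Matrix ι ι ℝ) (φ : (Fin k → ℝ) → ι → ℝ)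
    (y : Fin k → ℝ) (n : ι → ℝ) : ℝ :=
  - ∑ A, ∑ B, (firstFF g φ y)⁻¹ A B *
      ∑ μ, (∑ ν, g (φ y) μ ν * n ν) *
        (fderiv ℝ (fun z => dpar φ B μ z) y (Pi.single A 1)
          + ∑ ρ, ∑ σ, Γc g μ ρ σ (φ y) * dpar φ A ρ y * dpar φ B σ y)

/-- The base projection as a continuous linear map. -/
def baseL (d₁ d₂ : ℕ) : ((Fin d₁ ⊕ Fin d₂) → ℝ) →L[ℝ] (Fin d₁ → ℝ) :=
  ContinuousLinearMap.pi fun a => ContinuousLinearMap.proj (Sum.inl a)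

/-- The fiber projection as a continuous linear map. -/
def fibL (d₁ d₂ : ℕ) : ((Fin d₁ ⊕ Fin d₂) → ℝ) →L[ℝ] (Fin d₂ → ℝ) :=
  ContinuousLinearMap.pi fun a => ContinuousLinearMap.proj (Sum.inr a)

lemma baseL_inl {d₁ d₂ : ℕ} (a : Fin d₁) :
    baseL d₁ d₂ (Pi.single (Sum.inl a) 1) = Pi.single a 1 := by
  ext b
  simp [baseL, Pi.single_apply]

lemma baseL_inr {d₁ d₂ : ℕ} (a : Fin d₂) :
    baseL d₁ d₂ (Pi.single (Sum.inr a) 1) = 0 := by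
  ext b
  simp [baseL, Pi.single_apply]

lemma fibL_inl {d₁ d₂ : ℕ} (a : Fin d₁) :
    fibL d₁ d₂ (Pi.single (Sum.inl a) 1) = 0 := by
  ext b
  simp [fibL, Pi.single_apply]

lemma hasFDerivAt_base {d₁ d₂ : ℕ} (h : (Fin d₁ → ℝ) → ℝ) (x : (Fin d₁ ⊕ Fin d₂) → ℝ)
    (hh : DifferentiableAt ℝ h (basePt x)) :
    HasFDerivAt (fun y : (Fin d₁ ⊕ Fin d₂) → ℝ => h (basePt y))
      ((fderiv ℝ h (basePt x)).comp (baseL d₁ d₂)) x :=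
  HasFDerivAt.comp x (f := fun y => basePt y) hh.hasFDerivAt (baseL d₁ d₂).hasFDerivAt

lemma hasFDerivAt_fib {d₁ d₂ : ℕ} (h : (Fin d₂ → ℝ) → ℝ) (x : (Fin d₁ ⊕ Fin d₂) → ℝ)
    (hh : DifferentiableAt ℝ h (fibPt x)) :
    HasFDerivAt (fun y : (Fin d₁ ⊕ Fin d₂) → ℝ => h (fibPt y))
      ((fderiv ℝ h (fibPt x)).comp (fibL d₁ d₂)) x :=
  HasFDerivAt.comp x (f := fun y => fibPt y) hh.hasFDerivAt (fibL d₁ d₂).hasFDerivAt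

lemma pd_base_inl {d₁ d₂ : ℕ} (h : (Fin d₁ → ℝ) → ℝ) (x : (Fin d₁ ⊕ Fin d₂) → ℝ)
    (hh : DifferentiableAt ℝ h (basePt x)) (a : Fin d₁) :
    pd (fun y : (Fin d₁ ⊕ Fin d₂) → ℝ => h (basePt y)) (Sum.inl a) x = pd h a (basePt x) := by
  unfold pd
  rw [(hasFDerivAt_base h x hh).fderiv, ContinuousLinearMap.comp_apply, baseL_inl]

lemma pd_base_inr {d₁ d₂ : ℕ} (h : (Fin d₁ → ℝ) → ℝ) (x : (Fin d₁ ⊕ Fin d₂) → ℝ)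
    (hh : DifferentiableAt ℝ h (basePt x)) (a : Fin d₂) :
    pd (fun y : (Fin d₁ ⊕ Fin d₂) → ℝ => h (basePt y)) (Sum.inr a) x = 0 := by
  unfold pd
  rw [(hasFDerivAt_base h x hh).fderiv, ContinuousLinearMap.comp_apply, baseL_inr, map_zero]

lemma pd_fibre_inl {d₁ d₂ : ℕ} (f : (Fin d₁ → ℝ) → ℝ) (h : (Fin d₂ → ℝ) → ℝ)
    (x : (Fin d₁ ⊕ Fin d₂) → ℝ) (hf : DifferentiableAt ℝ f (basePt x))
    (hh : DifferentiableAt ℝ h (fibPt x)) (a : Fin d₁) :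
    pd (fun y : (Fin d₁ ⊕ Fin d₂) → ℝ => (f (basePt y)) ^ 2 * h (fibPt y)) (Sum.inl a) x
      = 2 * f (basePt x) * pd f a (basePt x) * h (fibPt x) := by
  unfold pd
  have H := ((hasFDerivAt_base f x hf).pow 2).mul (hasFDerivAt_fib h x hh)
  erw [H.fderiv]
  simp [baseL_inl, fibL_inl]
  ring

lemma ginv_warped {d₁ d₂ : ℕ} (gB : (Fin d₁ → ℝ) → Matrix (Fin d₁) (Fin d₁) ℝ)
    (gF : (Fin d₂ → ℝ) → Matrix (Fin d₂) (Fin d₂) ℝ) (f : (Fin d₁ → ℝ) → ℝ)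
    (hB : ∀ x, IsUnit (gB x).det) (hF : ∀ x, IsUnit (gF x).det) (hf : ∀ y, 0 < f y)
    (x : (Fin d₁ ⊕ Fin d₂) → ℝ) (a : Fin d₁) :
    (∀ b, ginv (warped gB gF f) x (Sum.inl a) (Sum.inl b) = ginv gB (basePt x) a b) ∧
    (∀ j, ginv (warped gB gF f) x (Sum.inl a) (Sum.inr j) = 0) := by
  have h1 : warped gB gF f x = Matrix.fromBlocks (gB (basePt x)) 0 0
      ((f (basePt x)) ^ 2 • gF (fibPt x)) := by
    ext μ ν
    rcases μ with μ | μ <;> rcases ν with ν | ν <;> simp [warped]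
  have hA : IsUnit (gB (basePt x)) := (Matrix.isUnit_iff_isUnit_det _).2 (hB _)
  have hD : IsUnit ((f (basePt x)) ^ 2 • gF (fibPt x)) := by
    rw [Matrix.isUnit_iff_isUnit_det, Matrix.det_smul]
    exact (isUnit_iff_ne_zero.2 (pow_ne_zero _ (pow_ne_zero _ (hf _).ne'))).mul (hF _)
  unfold ginv
  rw [h1, Matrix.inv_fromBlocks_zero₁₂_of_isUnit_iff _ _ _ (iff_of_true hA hD)]
  constructor <;> intro b <;> simp

lemma pd_zero' {ι : Type*} [Fintype ι] [DecidableEq ι] (ρ : ι) (x : ι → ℝ) :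
    pd (fun _ : ι → ℝ => (0 : ℝ)) ρ x = 0 := by
  simp [pd]

lemma Γ_bb {d₁ d₂ : ℕ} (gB : (Fin d₁ → ℝ) → Matrix (Fin d₁) (Fin d₁) ℝ)
    (gF : (Fin d₂ → ℝ) → Matrix (Fin d₂) (Fin d₂) ℝ) (f : (Fin d₁ → ℝ) → ℝ)
    (hB : SmoothMetric gB) (hF : SmoothMetric gF)
    (hf : ∀ y, 0 < f y) (x : (Fin d₁ ⊕ Fin d₂) → ℝ) (a : Fin d₁)
    (b c : Fin d₁) :
    Γc (warped gB gF f) (Sum.inl a) (Sum.inl b) (Sum.inl c) x = Γc gB a b c (basePt x) := by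
  have hd : ∀ p q, DifferentiableAt ℝ (fun y => gB y p q) (basePt x) := fun p q =>
    ((hB.1 p q).differentiable (by simp)).differentiableAt
  obtain ⟨h1, h2⟩ := ginv_warped gB gF f hB.2.2 hF.2.2 hf x a
  unfold Γc
  rw [Fintype.sum_sum_type]
  simp only [h1, h2, zero_mul, Finset.sum_const_zero, add_zero]
  simp only [warped, Matrix.of_apply]
  congr 1
  refine Finset.sum_congr rfl fun ν _ => ?_
  rw [pd_base_inl _ x (hd ν c), pd_base_inl _ x (hd ν b), pd_base_inl _ x (hd b c)]

lemma Γ_bf {d₁ d₂ : ℕ} (gB : (Fin d₁ → ℝ) → Matrix (Fin d₁) (Fin d₁) ℝ)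
    (gF : (Fin d₂ → ℝ) → Matrix (Fin d₂) (Fin d₂) ℝ) (f : (Fin d₁ → ℝ) → ℝ)
    (hB : SmoothMetric gB) (hF : SmoothMetric gF)
    (hf : ∀ y, 0 < f y) (x : (Fin d₁ ⊕ Fin d₂) → ℝ) (a : Fin d₁)
    (b : Fin d₁) (j : Fin d₂) :
    Γc (warped gB gF f) (Sum.inl a) (Sum.inl b) (Sum.inr j) x = 0 := by
  have hd : ∀ p q, DifferentiableAt ℝ (fun y => gB y p q) (basePt x) := fun p q =>
    ((hB.1 p q).differentiable (by simp)).differentiableAt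
  obtain ⟨h1, h2⟩ := ginv_warped gB gF f hB.2.2 hF.2.2 hf x a
  unfold Γc
  rw [Fintype.sum_sum_type]
  simp only [h1, h2, zero_mul, Finset.sum_const_zero, add_zero]
  simp only [warped, Matrix.of_apply, pd_zero']
  rw [Finset.sum_eq_zero, mul_zero]
  intro ν _
  rw [pd_base_inr _ x (hd ν b)]
  simp

lemma Γ_fb {d₁ d₂ : ℕ} (gB : (Fin d₁ → ℝ) → Matrix (Fin d₁) (Fin d₁) ℝ)
    (gF : (Fin d₂ → ℝ) → Matrix (Fin d₂) (Fin d₂) ℝ) (f : (Fin d₁ → ℝ) → ℝ)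
    (hB : SmoothMetric gB) (hF : SmoothMetric gF)
    (hf : ∀ y, 0 < f y) (x : (Fin d₁ ⊕ Fin d₂) → ℝ) (a : Fin d₁)
    (b : Fin d₁) (j : Fin d₂) :
    Γc (warped gB gF f) (Sum.inl a) (Sum.inr j) (Sum.inl b) x = 0 := by
  have hd : ∀ p q, DifferentiableAt ℝ (fun y => gB y p q) (basePt x) := fun p q =>
    ((hB.1 p q).differentiable (by simp)).differentiableAt
  obtain ⟨h1, h2⟩ := ginv_warped gB gF f hB.2.2 hF.2.2 hf x a
  unfold Γc
  rw [Fintype.sum_sum_type]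
  simp only [h1, h2, zero_mul, Finset.sum_const_zero, add_zero]
  simp only [warped, Matrix.of_apply, pd_zero']
  rw [Finset.sum_eq_zero, mul_zero]
  intro ν _
  rw [pd_base_inr _ x (hd ν b)]
  simp

lemma Γ_ff {d₁ d₂ : ℕ} (gB : (Fin d₁ → ℝ) → Matrix (Fin d₁) (Fin d₁) ℝ)
    (gF : (Fin d₂ → ℝ) → Matrix (Fin d₂) (Fin d₂) ℝ) (f : (Fin d₁ → ℝ) → ℝ)
    (hB : SmoothMetric gB) (hF : SmoothMetric gF) (hfs : ContDiff ℝ (⊤ : ℕ∞) f)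
    (hf : ∀ y, 0 < f y) (x : (Fin d₁ ⊕ Fin d₂) → ℝ) (a : Fin d₁)
    (i j : Fin d₂) :
    Γc (warped gB gF f) (Sum.inl a) (Sum.inr i) (Sum.inr j) x =
      -(f (basePt x) * (∑ b, ginv gB (basePt x) a b * pd f b (basePt x))) * gF (fibPt x) i j := by
  have hd : ∀ p q, DifferentiableAt ℝ (fun y => gF y p q) (fibPt x) := fun p q =>
    ((hF.1 p q).differentiable (by simp)).differentiableAt
  have hfd : DifferentiableAt ℝ f (basePt x) := (hfs.differentiable (by simp)).differentiableAt
  obtain ⟨h1, h2⟩ := ginv_warped gB gF f hB.2.2 hF.2.2 hf x a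
  unfold Γc
  rw [Fintype.sum_sum_type]
  simp only [h1, h2, zero_mul, Finset.sum_const_zero, add_zero]
  simp only [warped, Matrix.of_apply, pd_zero']
  simp only [pd_fibre_inl f _ x hfd (hd i j)]
  rw [Finset.mul_sum, Finset.mul_sum, ← Finset.sum_neg_distrib, Finset.sum_mul]
  refine Finset.sum_congr rfl fun ν _ => ?_
  ring

/-- Along any affinely parametrized null geodesic of the warped
product, the base projection satisfies the subgeodesic equation
`N̂^b∇̂_b N̂^a = −(ĝ(N̂,N̂)) ∇̂^a(ln f) = (C/f³) ∇̂^a f = −(C/2) ∇̂^a(1/f²)`,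
with first integral `ĝ(N̂,N̂) = −C/f²`. -/
theorem base_projection_of_null_geodesic {n : ℕ}
    (gB : (Fin 4 → ℝ) → Matrix (Fin 4) (Fin 4) ℝ)
    (gF : (Fin n → ℝ) → Matrix (Fin n) (Fin n) ℝ)
    (f : (Fin 4 → ℝ) → ℝ)
    (hB : Lorentzian gB) (hF : Riemannian gF)
    (hf : ContDiff ℝ (⊤ : ℕ∞) f) (hfpos : ∀ y, 0 < f y)
    (γ : ℝ → (Fin 4 ⊕ Fin n) → ℝ) (hγs : SmoothCurve γ)
    (hgeo : IsGeodesic (warped gB gF f) γ)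
    (hnull : ∀ u, sq (warped gB gF f) (γ u) (vel γ u) (vel γ u) = 0)
    (C : ℝ) (hC0 : 0 ≤ C)
    (hC : ∀ u, sq gF (fibPt (γ u)) (vel (fibCurve γ) u) (vel (fibCurve γ) u)
        = C / (f (basePt (γ u))) ^ 4) :
    (∀ (u : ℝ) (a : Fin 4),
      (deriv (fun w => vel (baseCurve γ) w a) u
          + ∑ b, ∑ c, Γc gB a b c (basePt (γ u)) * vel (baseCurve γ) u b * vel (baseCurve γ) u c
        = -(sq gB (basePt (γ u)) (vel (baseCurve γ) u) (vel (baseCurve γ) u))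
            * (∑ b, ginv gB (basePt (γ u)) a b * pd (fun y => Real.log (f y)) b (basePt (γ u)))) ∧
      (deriv (fun w => vel (baseCurve γ) w a) u
          + ∑ b, ∑ c, Γc gB a b c (basePt (γ u)) * vel (baseCurve γ) u b * vel (baseCurve γ) u c
        = C / (f (basePt (γ u))) ^ 3
            * (∑ b, ginv gB (basePt (γ u)) a b * pd f b (basePt (γ u)))) ∧
      (deriv (fun w => vel (baseCurve γ) w a) u
          + ∑ b, ∑ c, Γc gB a b c (basePt (γ u)) * vel (baseCurve γ) u b * vel (baseCurve γ) u c
        = -(C / 2)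
            * (∑ b, ginv gB (basePt (γ u)) a b * pd (fun y => 1 / (f y) ^ 2) b (basePt (γ u))))) ∧
    (∀ u : ℝ, sq gB (basePt (γ u)) (vel (baseCurve γ) u) (vel (baseCurve γ) u)
        = -C / (f (basePt (γ u))) ^ 2) := by
  have hfd : Differentiable ℝ f := hf.differentiable (by simp)
  have key : ∀ u : ℝ, sq gB (basePt (γ u)) (vel (baseCurve γ) u) (vel (baseCurve γ) u)
        = -C / (f (basePt (γ u))) ^ 2 := by
    intro u
    have h := hnull u
    have hc := hC u
    have hp := hfpos (basePt (γ u))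
    have e : sq (warped gB gF f) (γ u) (vel γ u) (vel γ u)
        = sq gB (basePt (γ u)) (vel (baseCurve γ) u) (vel (baseCurve γ) u)
          + f (basePt (γ u)) ^ 2
            * sq gF (fibPt (γ u)) (vel (fibCurve γ) u) (vel (fibCurve γ) u) := by
      unfold sq
      simp only [Fintype.sum_sum_type, warped, Matrix.of_apply, zero_mul, Finset.sum_const_zero,
        add_zero, zero_add, Finset.mul_sum]
      congr 1
      refine Finset.sum_congr rfl fun i _ => Finset.sum_congr rfl fun j _ => ?_
      simp only [vel, fibCurve, fibPt]
      ring
    rw [e, hc] at h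
    rw [eq_neg_of_add_eq_zero_left h]
    field_simp
  have main : ∀ (u : ℝ) (a : Fin 4), deriv (fun w => vel (baseCurve γ) w a) u
          + ∑ b, ∑ c, Γc gB a b c (basePt (γ u)) * vel (baseCurve γ) u b * vel (baseCurve γ) u c
        = C / (f (basePt (γ u))) ^ 3
            * (∑ b, ginv gB (basePt (γ u)) a b * pd f b (basePt (γ u))) := by
    intro u a
    have hp := hfpos (basePt (γ u))
    have h := hgeo u (Sum.inl a)
    unfold covD at h
    simp only [Fintype.sum_sum_type, Γ_bb gB gF f hB.1 hF.1 hfpos,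
      Γ_bf gB gF f hB.1 hF.1 hfpos, Γ_fb gB gF f hB.1 hF.1 hfpos,
      Γ_ff gB gF f hB.1 hF.1 hf hfpos, zero_mul, Finset.sum_const_zero, add_zero, zero_add] at h
    set G := ∑ b, ginv gB (basePt (γ u)) a b * pd f b (basePt (γ u)) with hG
    have e : ∑ i, ∑ j, -(f (basePt (γ u)) * G) * gF (fibPt (γ u)) i j
          * vel γ u (Sum.inr i) * vel γ u (Sum.inr j)
        = -(f (basePt (γ u)) * G)
          * sq gF (fibPt (γ u)) (vel (fibCurve γ) u) (vel (fibCurve γ) u) := by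
      unfold sq
      simp only [Finset.mul_sum]
      refine Finset.sum_congr rfl fun i _ => Finset.sum_congr rfl fun j _ => ?_
      simp only [vel, fibCurve, fibPt]
      ring
    rw [e, hC u, ← add_assoc] at h
    have h' := eq_neg_of_add_eq_zero_left h
    refine Eq.trans h' ?_
    field_simp
  refine ⟨fun u a => ⟨?_, main u a, ?_⟩, key⟩
  · rw [main u a, key u]
    have hp := hfpos (basePt (γ u))
    rw [Finset.mul_sum, Finset.mul_sum]
    refine Finset.sum_congr rfl fun b _ => ?_
    have : pd (fun y => Real.log (f y)) b (basePt (γ u))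
        = (f (basePt (γ u)))⁻¹ * pd f b (basePt (γ u)) := by
      unfold pd
      rw [((hfd _).hasFDerivAt.log hp.ne').fderiv]
      simp
    rw [this]
    field_simp
  · rw [main u a]
    have hp := hfpos (basePt (γ u))
    rw [Finset.mul_sum, Finset.mul_sum]
    refine Finset.sum_congr rfl fun b _ => ?_
    have : pd (fun y => 1 / (f y) ^ 2) b (basePt (γ u))
        = -2 / (f (basePt (γ u))) ^ 3 * pd f b (basePt (γ u)) := by
      unfold pd
      have h1 : HasDerivAt (fun t : ℝ => 1 / t ^ 2) (-2 / (f (basePt (γ u))) ^ 3)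
          (f (basePt (γ u))) := by
        have := (hasDerivAt_pow 2 (f (basePt (γ u)))).inv (pow_ne_zero 2 hp.ne')
        simp only [one_div]
        refine this.congr_deriv ?_
        field_simp
        norm_num
        ring
      have h2 : HasFDerivAt (fun y => 1 / (f y) ^ 2) _ (basePt (γ u)) :=
        h1.comp_hasFDerivAt (f := f) _ (hfd _).hasFDerivAt
      rw [h2.fderiv]
      simp
    rw [this]
    field_simp

end Paper
end
end

section
/- Let ζ_p ⊂ Y_p be (the lift to the warped product M = M₄ ×_f Y of) a compact submanifold ζ ⊂ Y, and let n^μ = (n^a, n^i) be a future-pointing normal to ζ_p at q ∈ ζ_p. Then the expansion of ζ_p in (M,g) along n equals θ(n) = θ̄_{n̄} + (D−m) f⁻¹ n^a ∂_a f |_p, where θ̄_{n̄} = ḡ_{ij} H̄^i n^j is the expansion of ζ_p as a submanifold of (Y_p, ḡ) along the fiber component n̄, H̄ being the mean curvature vector of ζ_p in (Y_p, ḡ), m the co-dimension of ζ_p in M, and D = dim M. -/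
open Filter MeasureTheory
open scoped BigOperators Topology

noncomputable section

namespace Paper

variable {ι : Type*} [Fintype ι] [DecidableEq ι]
variable {κ : Type*} [Fintype κ] [DecidableEq κ]

/-- The lift to the warped product of a parametrized submanifold of the fiber,
placed at the base point `p`. -/
def liftPar {d₁ d₂ k : ℕ} (p : Fin d₁ → ℝ) (φF : (Fin k → ℝ) → Fin d₂ → ℝ) :
    (Fin k → ℝ) → (Fin d₁ ⊕ Fin d₂) → ℝ :=
  fun z μ => match μ with
  | Sum.inl a => p a
  | Sum.inr i => φF z i

lemma lower_Γc (g : (ι → ℝ) → Matrix ι ι ℝ) (x : ι → ℝ) (hs : ∀ μ ν, g x μ ν = g x ν μ)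
    (hu : IsUnit (g x).det) (nv : ι → ℝ) (ρ σ : ι) :
    ∑ μ, (∑ ν, g x μ ν * nv ν) * Γc g μ ρ σ x
      = (1 / 2) * ∑ ν, nv ν *
        (pd (fun y => g y ν σ) ρ x + pd (fun y => g y ν ρ) σ x - pd (fun y => g y ρ σ) ν x) := by
  unfold Γc ginv
  set w : ι → ℝ := fun ν => pd (fun y => g y ν σ) ρ x + pd (fun y => g y ν ρ) σ x
    - pd (fun y => g y ρ σ) ν x with hw
  have h1 : (g x).mulVec ((g x)⁻¹.mulVec w) = w := by
    rw [Matrix.mulVec_mulVec, Matrix.mul_nonsing_inv _ hu, Matrix.one_mulVec]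
  have h2 : (g x).mulVec nv ⬝ᵥ ((g x)⁻¹.mulVec w) = nv ⬝ᵥ w := by
    have ht : (g x).transpose = g x := by
      ext a b
      exact hs b a
    rw [← Matrix.vecMul_transpose, ht, ← Matrix.dotProduct_mulVec, h1]
  simp only [dotProduct, Matrix.mulVec] at h2
  rw [← h2, Finset.mul_sum]
  refine Finset.sum_congr rfl fun μ _ => ?_
  ring

/-- Pairing of the normal with the acceleration, lowered form. -/
lemma accel_lower {k : ℕ} (g : (ι → ℝ) → Matrix ι ι ℝ) (φ : (Fin k → ℝ) → ι → ℝ)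
    (y : Fin k → ℝ) (nv : ι → ℝ) (hs : ∀ μ ν, g (φ y) μ ν = g (φ y) ν μ)
    (hu : IsUnit (g (φ y)).det) (A B : Fin k) :
    ∑ μ, (∑ ν, g (φ y) μ ν * nv ν) *
        (fderiv ℝ (fun z => dpar φ B μ z) y (Pi.single A 1)
          + ∑ ρ, ∑ σ, Γc g μ ρ σ (φ y) * dpar φ A ρ y * dpar φ B σ y)
      = ∑ μ, (∑ ν, g (φ y) μ ν * nv ν) * fderiv ℝ (fun z => dpar φ B μ z) y (Pi.single A 1)
        + ∑ ρ, ∑ σ, ((1 / 2) * ∑ ν, nv ν *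
        (pd (fun y => g y ν σ) ρ (φ y) + pd (fun y => g y ν ρ) σ (φ y)
          - pd (fun y => g y ρ σ) ν (φ y))) * dpar φ A ρ y * dpar φ B σ y := by
  simp only [mul_add, Finset.sum_add_distrib]
  congr 1
  simp only [← lower_Γc g (φ y) hs hu, Finset.mul_sum (s := Finset.univ (α := ι)) ]
  rw [Finset.sum_comm]
  refine Finset.sum_congr rfl fun ρ _ => ?_
  rw [Finset.sum_comm]
  refine Finset.sum_congr rfl fun σ _ => ?_
  simp only [Finset.sum_mul]
  refine Finset.sum_congr rfl fun μ _ => ?_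
  refine Finset.sum_congr rfl fun ν _ => ?_
  ring

lemma warped_det {d₁ d₂ : ℕ} (gB : (Fin d₁ → ℝ) → Matrix (Fin d₁) (Fin d₁) ℝ)
    (gF : (Fin d₂ → ℝ) → Matrix (Fin d₂) (Fin d₂) ℝ) (f : (Fin d₁ → ℝ) → ℝ)
    (x : (Fin d₁ ⊕ Fin d₂) → ℝ) (hB : IsUnit (gB (basePt x)).det)
    (hF : IsUnit (gF (fibPt x)).det) (hf : f (basePt x) ≠ 0) :
    IsUnit (warped gB gF f x).det := by
  have : warped gB gF f x
      = Matrix.fromBlocks (gB (basePt x)) 0 0 ((f (basePt x)) ^ 2 • gF (fibPt x)) := by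
    ext μ ν
    rcases μ with a | i <;> rcases ν with b | j <;> simp [warped]
  rw [this, Matrix.det_fromBlocks_zero₂₁, Matrix.det_smul]
  refine hB.mul (IsUnit.mul ?_ hF)
  exact (pow_ne_zero _ (pow_ne_zero _ hf)).isUnit

/-- Derivative of `f² ḡ_ij` on the product. -/
lemma pd_warp {d₁ d₂ : ℕ} (f : (Fin d₁ → ℝ) → ℝ) (h : (Fin d₂ → ℝ) → ℝ)
    (x : (Fin d₁ ⊕ Fin d₂) → ℝ) (hf : DifferentiableAt ℝ f (basePt x))
    (hh : DifferentiableAt ℝ h (fibPt x)) :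
    (∀ a, pd (fun z : (Fin d₁ ⊕ Fin d₂) → ℝ => (f (basePt z)) ^ 2 * h (fibPt z)) (Sum.inl a) x
      = 2 * f (basePt x) * pd f a (basePt x) * h (fibPt x)) ∧
    (∀ i, pd (fun z : (Fin d₁ ⊕ Fin d₂) → ℝ => (f (basePt z)) ^ 2 * h (fibPt z)) (Sum.inr i) x
      = (f (basePt x)) ^ 2 * pd h i (fibPt x)) := by
  let LB : ((Fin d₁ ⊕ Fin d₂) → ℝ) →L[ℝ] (Fin d₁ → ℝ) :=
    ContinuousLinearMap.pi fun a => ContinuousLinearMap.proj (Sum.inl a)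
  let LF : ((Fin d₁ ⊕ Fin d₂) → ℝ) →L[ℝ] (Fin d₂ → ℝ) :=
    ContinuousLinearMap.pi fun a => ContinuousLinearMap.proj (Sum.inr a)
  have h1 : HasFDerivAt (fun z : (Fin d₁ ⊕ Fin d₂) → ℝ => f (basePt z))
      ((fderiv ℝ f (basePt x)).comp LB) x :=
    HasFDerivAt.comp (g := f) x hf.hasFDerivAt (LB.hasFDerivAt (x := x))
  have h2 : HasFDerivAt (fun z : (Fin d₁ ⊕ Fin d₂) → ℝ => h (fibPt z))
      ((fderiv ℝ h (fibPt x)).comp LF) x :=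
    HasFDerivAt.comp (g := h) x hh.hasFDerivAt (LF.hasFDerivAt (x := x))
  have h3 := ((h1.pow 2).mul h2).fderiv
  have e1 : ∀ a, LB (Pi.single (Sum.inl a) 1) = Pi.single a 1 := by
    intro a; ext b; simp [LB, Pi.single_apply]
  have e2 : ∀ i, LB (Pi.single (Sum.inr i) 1) = 0 := by
    intro a; ext b; simp [LB, Pi.single_apply]
  have e3 : ∀ a, LF (Pi.single (Sum.inl a) 1) = 0 := by
    intro a; ext b; simp [LF, Pi.single_apply]
  have e4 : ∀ i, LF (Pi.single (Sum.inr i) 1) = Pi.single i 1 := by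
    intro a; ext b; simp [LF, Pi.single_apply]
  constructor
  · intro a
    have := congrArg (fun L => L (Pi.single (Sum.inl a) 1)) h3
    refine this.trans ?_
    simp [e1, e3, pd]
    ring
  · intro i
    have := congrArg (fun L => L (Pi.single (Sum.inr i) 1)) h3
    refine this.trans ?_
    simp [e2, e4, pd]

/-- For (the lift of) a compact submanifold `ζ_p ⊆ Y_p` of
co-dimension `m` in `M = M₄ ×_f Y` and a future-pointing normal `n = (n^a, n^i)`
at a point of `ζ_p`, the expansion satisfies
`θ(n) = θ̄_{n̄} + (D−m) f⁻¹ n^a ∂_a f|_p`. -/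
theorem expansion_of_lifted_submanifold {n k m : ℕ} (hkm : k + m = 4 + n)
    (gB : (Fin 4 → ℝ) → Matrix (Fin 4) (Fin 4) ℝ)
    (gF : (Fin n → ℝ) → Matrix (Fin n) (Fin n) ℝ)
    (f : (Fin 4 → ℝ) → ℝ)
    (hB : Lorentzian gB) (hF : Riemannian gF)
    (hf : ContDiff ℝ (⊤ : ℕ∞) f) (hfpos : ∀ y, 0 < f y)
    (Th : (Fin 4 → ℝ) → Fin 4 → ℝ) (hT : TimeOrientation gB Th)
    (p : Fin 4 → ℝ)
    (φF : (Fin k → ℝ) → Fin n → ℝ)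
    (hφs : ∀ i, ContDiff ℝ (⊤ : ℕ∞) fun z => φF z i)
    (hcomp : IsCompact (Set.range φF))
    (y : Fin k → ℝ)
    (hreg : (firstFF gF φF y).PosDef)
    (nv : (Fin 4 ⊕ Fin n) → ℝ)
    (hnormal : ∀ A : Fin k,
      ∑ μ, ∑ ν, warped gB gF f (liftPar p φF y) μ ν * nv μ * dpar (liftPar p φF) A ν y = 0)
    (hfuture : sq (warped gB gF f) (liftPar p φF y) (liftT Th (liftPar p φF y)) nv < 0) :
    expansionPar (warped gB gF f) (liftPar p φF) y nv
      = expansionPar gF φF y (fun i => nv (Sum.inr i))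
        + (k : ℝ) * (f p)⁻¹ * ∑ a, nv (Sum.inl a) * pd f a p := by
  have hfp : f p ≠ 0 := (hfpos p).ne'
  set x : (Fin 4 ⊕ Fin n) → ℝ := liftPar p φF y with hx
  have hbx : basePt x = p := rfl
  have hfx : fibPt x = φF y := rfl
  have dB : ∀ A a z, dpar (liftPar p φF) A (Sum.inl a) z = 0 := by
    intro A a z
    simp [dpar, liftPar]
  have dF : ∀ A i z, dpar (liftPar p φF) A (Sum.inr i) z = dpar φF A i z := by
    intro A i z
    rfl
  have hws : ∀ μ ν, warped gB gF f x μ ν = warped gB gF f x ν μ := by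
    intro μ ν
    rcases μ with a | i <;> rcases ν with b | j <;> simp [warped]
    · exact hB.1.2.1 _ _ _
    · left; exact hF.1.2.1 _ _ _
  have hwu : IsUnit (warped gB gF f x).det :=
    warped_det gB gF f x (hB.1.2.2 _) (hF.1.2.2 _) hfp
  have hff : firstFF (warped gB gF f) (liftPar p φF) y = (f p) ^ 2 • firstFF gF φF y := by
    ext A B
    simp only [firstFF, Matrix.of_apply, Matrix.smul_apply, Fintype.sum_sum_type, dB, dF,
      ← hx, smul_eq_mul, Finset.mul_sum]
    simp [warped, hbx, hfx, mul_assoc]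
  have hinv : (firstFF (warped gB gF f) (liftPar p φF) y)⁻¹
      = ((f p) ^ 2)⁻¹ • (firstFF gF φF y)⁻¹ := by
    rw [hff]
    apply Matrix.inv_eq_right_inv
    rw [Matrix.smul_mul, Matrix.mul_smul, smul_smul, mul_inv_cancel₀ (pow_ne_zero _ hfp), one_smul]
    exact Matrix.mul_nonsing_inv _ hreg.det_pos.ne'.isUnit
  have hdf : DifferentiableAt ℝ f (basePt x) := (hf.differentiable (by simp)).differentiableAt
  have hdg : ∀ i j, DifferentiableAt ℝ (fun z => gF z i j) (fibPt x) := fun i j =>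
    ((hF.1.1 i j).differentiable (by simp)).differentiableAt
  have pFB : ∀ i j a, pd (fun z => warped gB gF f z (Sum.inr i) (Sum.inr j)) (Sum.inl a) x
      = 2 * f p * pd f a p * gF (φF y) i j := fun i j a =>
    (pd_warp f (fun z => gF z i j) x hdf (hdg i j)).1 a
  have pFF : ∀ i j l, pd (fun z => warped gB gF f z (Sum.inr i) (Sum.inr j)) (Sum.inr l) x
      = (f p) ^ 2 * pd (fun z => gF z i j) l (φF y) := fun i j a =>
    (pd_warp f (fun z => gF z i j) x hdf (hdg i j)).2 a
  have pM : ∀ a j ρ, pd (fun z => warped gB gF f z (Sum.inl a) (Sum.inr j)) ρ x = 0 := by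
    intro a j ρ
    simp [pd, warped]
  set S : ℝ := ∑ a, nv (Sum.inl a) * pd f a p with hS
  have key : ∀ A B : Fin k,
      ∑ μ, (∑ ν, warped gB gF f x μ ν * nv ν) *
        (fderiv ℝ (fun z => dpar (liftPar p φF) B μ z) y (Pi.single A 1)
          + ∑ ρ, ∑ σ, Γc (warped gB gF f) μ ρ σ x * dpar (liftPar p φF) A ρ y
            * dpar (liftPar p φF) B σ y)
      = (f p) ^ 2 * (∑ μ, (∑ ν, gF (φF y) μ ν * nv (Sum.inr ν)) *
        (fderiv ℝ (fun z => dpar φF B μ z) y (Pi.single A 1)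
          + ∑ ρ, ∑ σ, Γc gF μ ρ σ (φF y) * dpar φF A ρ y * dpar φF B σ y))
        - f p * S * firstFF gF φF y A B := by
    intro A B
    rw [accel_lower (warped gB gF f) (liftPar p φF) y nv hws hwu A B,
      accel_lower gF φF y (fun i => nv (Sum.inr i)) (hF.1.2.1 _) (hF.1.2.2 _) A B]
    rw [← hx, mul_add, add_sub_assoc]
    congr 1
    · simp only [Fintype.sum_sum_type, dB, dF]
      simp [warped, hbx, hfx, Finset.mul_sum, Finset.sum_mul, mul_assoc]
    · simp only [Fintype.sum_sum_type, dB, dF, pFB, pFF, pM, firstFF, Matrix.of_apply]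
      simp only [mul_zero, zero_mul, Finset.sum_const_zero, zero_add, add_zero, zero_sub]
      rw [Finset.mul_sum, Finset.mul_sum, ← Finset.sum_sub_distrib]
      refine Finset.sum_congr rfl fun i _ => ?_
      rw [Finset.mul_sum, Finset.mul_sum, ← Finset.sum_sub_distrib]
      refine Finset.sum_congr rfl fun j _ => ?_
      have e1 : ∑ a, nv (Sum.inl a) * -(2 * f p * pd f a p * gF (φF y) i j)
          = - (2 * f p * gF (φF y) i j) * S := by
        rw [hS, Finset.mul_sum]
        refine Finset.sum_congr rfl fun a _ => ?_
        ring
      have e2 : ∑ l, nv (Sum.inr l) * ((f p) ^ 2 * pd (fun z => gF z l j) i (φF y)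
            + (f p) ^ 2 * pd (fun z => gF z l i) j (φF y)
            - (f p) ^ 2 * pd (fun z => gF z i j) l (φF y))
          = (f p) ^ 2 * ∑ l, nv (Sum.inr l) * (pd (fun z => gF z l j) i (φF y)
            + pd (fun z => gF z l i) j (φF y) - pd (fun z => gF z i j) l (φF y)) := by
        rw [Finset.mul_sum]
        refine Finset.sum_congr rfl fun a _ => ?_
        ring
      rw [e1, e2]
      ring
  have htr : ∑ A, ∑ B, (firstFF gF φF y)⁻¹ A B * firstFF gF φF y A B = (k : ℝ) := by
    have h1 : (firstFF gF φF y)⁻¹ * firstFF gF φF y = 1 :=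
      Matrix.nonsing_inv_mul _ hreg.det_pos.ne'.isUnit
    have h2 := congrArg Matrix.trace h1
    rw [Matrix.trace_one, Fintype.card_fin] at h2
    rw [← h2]
    simp only [Matrix.trace, Matrix.diag, Matrix.mul_apply]
    refine Finset.sum_congr rfl fun A _ => Finset.sum_congr rfl fun B _ => ?_
    have := hreg.isHermitian.apply A B
    simp only [star_trivial] at this
    rw [this]
  unfold expansionPar
  rw [← hx, hinv, ← htr]
  simp only [key, Matrix.smul_apply, smul_eq_mul]
  rw [neg_add_eq_sub, ← neg_sub, neg_inj, Finset.sum_mul, Finset.sum_mul,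
    ← Finset.sum_sub_distrib]
  refine Finset.sum_congr rfl fun A _ => ?_
  rw [Finset.sum_mul, Finset.sum_mul, ← Finset.sum_sub_distrib]
  refine Finset.sum_congr rfl fun B _ => ?_
  field_simp


end Paper
end
end
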